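/- arXiv:1103.3936 — 2 statements merged into one kernel-verified Lean document; each statement's English description precedes it below -/
import Mathlib

section
/- Let O be a commutative Noetherian local ring with maximal ideal m. A bounded complex X of finitely generated O-modules is perfect (quasi-isomorphic to a bounded complex of finite rank free modules) if and only if there exists n₀ ∈ ℕ such that Hom_{D^b(O)}(X, (O/m)[n]) = 0 for all n ≥ n₀. -/
open CategoryTheory Limits

namespace PerfAux
open DerivedCategory Pretriangulated

universe w
variable {O : Type} [CommRing O]

/-- bounded complex of finite free modules -/
def PC (Y : CochainComplex (ModuleCat.{0} O) ℤ) : Prop :=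
  (∃ a b : ℤ, ∀ n : ℤ, (n < a ∨ b < n) → IsZero (Y.X n)) ∧
    (∀ n : ℤ, Module.Finite O (Y.X n) ∧ Module.Free O (Y.X n))

lemma finite_of_isZero {M : ModuleCat.{0} O} (h : IsZero M) : Module.Finite O M := by
  have := ModuleCat.subsingleton_of_isZero h
  infer_instance

lemma free_of_isZero {M : ModuleCat.{0} O} (h : IsZero M) : Module.Free O M := by
  have := ModuleCat.subsingleton_of_isZero h
  infer_instance

lemma PC.isKProjective {Y : CochainComplex (ModuleCat.{0} O) ℤ} (h : PC Y) : Y.IsKProjective := by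
  obtain ⟨⟨a, b, hab⟩, hf⟩ := h
  have : Y.IsStrictlyLE b := by
    rw [CochainComplex.isStrictlyLE_iff]
    exact fun i hi => hab i (Or.inr hi)
  have (n : ℤ) : Projective (Y.X n) := by
    have := (hf n).2
    exact ModuleCat.projective_of_free (Module.Free.chooseBasis O (Y.X n))
  exact CochainComplex.isKProjective_of_projective Y b

lemma PC.shift {Y : CochainComplex (ModuleCat.{0} O) ℤ} (h : PC Y) (k : ℤ) : PC (Y⟦k⟧) := by
  obtain ⟨⟨a, b, hab⟩, hf⟩ := h
  refine ⟨⟨a - k, b - k, fun n hn => hab (n + k) (by lia)⟩, fun n => hf (n + k)⟩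

lemma PC.mappingCone {Y Z : CochainComplex (ModuleCat.{0} O) ℤ} (hY : PC Y) (hZ : PC Z)
    (f : Y ⟶ Z) : PC (CochainComplex.mappingCone f) := by
  obtain ⟨⟨a, b, hab⟩, hf⟩ := hY
  obtain ⟨⟨a', b', hab'⟩, hf'⟩ := hZ
  refine ⟨⟨min (a - 1) a', max b b', fun n hn => ?_⟩, fun n => ?_⟩
  · rw [CochainComplex.mappingCone.isZero_X_iff]
    exact ⟨hab _ (by lia), hab' _ (by lia)⟩
  · let e := (HomologicalComplex.homotopyCofiber.XIsoBiprod f n (n + 1) rfl ≪≫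
      ModuleCat.biprodIsoProd _ _).toLinearEquiv
    have := (hf (n+1)).1
    have := (hf (n+1)).2
    have := (hf' n).1
    have := (hf' n).2
    exact ⟨Module.Finite.equiv e.symm, Module.Free.of_equiv e.symm⟩

lemma PC.single (F : ModuleCat.{0} O) [Module.Finite O F] [Module.Free O F] (b : ℤ) :
    PC ((HomologicalComplex.single _ (ComplexShape.up ℤ) b).obj F) := by
  refine ⟨⟨b, b, fun n hn => HomologicalComplex.isZero_single_obj_X _ _ _ _ (by lia)⟩, fun n => ?_⟩
  by_cases h : n = b
  · let e := (HomologicalComplex.singleObjXIsoOfEq (ComplexShape.up ℤ) b F n h).toLinearEquiv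
    exact ⟨Module.Finite.equiv e.symm, Module.Free.of_equiv e.symm⟩
  · have := HomologicalComplex.isZero_single_obj_X (ComplexShape.up ℤ) b F n h
    exact ⟨finite_of_isZero this, free_of_isZero this⟩

lemma free_of_ext [IsNoetherianRing O] [IsLocalRing O] (M : ModuleCat.{0} O) [Module.Finite O M]
    (h : ∀ x : Abelian.Ext M (ModuleCat.of O (IsLocalRing.ResidueField O)) 1, x = 0) :
    Module.Free O M := by
  obtain ⟨n, g, hg⟩ := Module.Finite.exists_fin' O M
  let S : ShortComplex (ModuleCat.{0} O) := ShortComplex.mk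
    (ModuleCat.ofHom (LinearMap.ker g).subtype) (ModuleCat.ofHom g) (by ext x; simp)
  have hex : Function.Exact (LinearMap.ker g).subtype g := LinearMap.exact_subtype_ker_map g
  have hS : S.ShortExact :=
    { exact := by
        rw [ShortComplex.ShortExact.moduleCat_exact_iff_function_exact]
        exact hex
      mono_f := by
        rw [ModuleCat.mono_iff_injective]
        exact Subtype.val_injective
      epi_g := by
        rw [ModuleCat.epi_iff_surjective]
        exact hg }
  have ext (φ : LinearMap.ker g →ₗ[O] IsLocalRing.ResidueField O) :
      ∃ φ' : (Fin n → O) →ₗ[O] IsLocalRing.ResidueField O, φ' ∘ₗ (LinearMap.ker g).subtype = φ := by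
    obtain ⟨x, hx⟩ := Abelian.Ext.contravariant_sequence_exact₁ hS _
      (Abelian.Ext.mk₀ (ModuleCat.ofHom φ)) (n₁ := 1) (by simp) (h _)
    obtain ⟨y, rfl⟩ := (Abelian.Ext.mk₀_bijective _ _).2 x
    rw [Abelian.Ext.mk₀_comp_mk₀] at hx
    have := (Abelian.Ext.mk₀_bijective _ _).1 hx
    exact ⟨y.hom, congrArg ModuleCat.Hom.hom this⟩
  refine Module.free_of_lTensor_residueField_injective _ g hg hex ?_
  rw [injective_iff_map_eq_zero]
  intro t ht
  by_contra hne
  obtain ⟨ψ, hψ⟩ : ∃ ψ : Module.Dual (IsLocalRing.ResidueField O)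
      (TensorProduct O (IsLocalRing.ResidueField O) (LinearMap.ker g)), ψ t ≠ 0 := by
    by_contra! hc
    exact hne ((Module.forall_dual_apply_eq_zero_iff _ t).1 hc)
  let φ : LinearMap.ker g →ₗ[O] IsLocalRing.ResidueField O :=
    ψ.restrictScalars O ∘ₗ TensorProduct.mk O (IsLocalRing.ResidueField O) (LinearMap.ker g) 1
  obtain ⟨φ', hφ'⟩ := ext φ
  let Φ : TensorProduct O (IsLocalRing.ResidueField O) (Fin n → O) →ₗ[O]
      IsLocalRing.ResidueField O :=
    (LinearMap.mul' O _) ∘ₗ φ'.lTensor (IsLocalRing.ResidueField O)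
  have key : Φ ∘ₗ (LinearMap.ker g).subtype.lTensor (IsLocalRing.ResidueField O) =
      ψ.restrictScalars O := by
    apply TensorProduct.ext'
    intro a x
    have h1 : φ' x = φ x := by rw [← hφ']; rfl
    have h2 : ψ (a ⊗ₜ x) = a * φ x := by
      have : (a ⊗ₜ[O] x : TensorProduct O (IsLocalRing.ResidueField O) (LinearMap.ker g)) =
        a • (1 ⊗ₜ[O] x) := by simp [TensorProduct.smul_tmul']
      rw [this, map_smul]
      rfl
    simp [Φ, h1, h2]
  apply hψ
  have := LinearMap.congr_fun key t
  rw [LinearMap.comp_apply, ht, map_zero] at this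
  exact this.symm

lemma finite_of_exact [IsNoetherianRing O] (S : ShortComplex (ModuleCat.{0} O)) (hS : S.Exact)
    [Module.Finite O S.X₁] [Module.Finite O S.X₃] : Module.Finite O S.X₂ := by
  rw [ShortComplex.ShortExact.moduleCat_exact_iff_function_exact] at hS
  have h1 : (LinearMap.ker S.g.hom).FG := by
    have : LinearMap.ker S.g.hom = LinearMap.range S.f.hom := by
      ext x
      exact hS x
    rw [this, LinearMap.range_eq_map]
    exact (Module.Finite.fg_top).map _
  have h2 : (LinearMap.range S.g.hom).FG := IsNoetherian.noetherian _
  refine ⟨Submodule.fg_of_fg_map_of_fg_inf_ker S.g.hom ?_ ?_⟩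
  · rwa [← LinearMap.range_eq_map]
  · rwa [top_inf_eq]

variable [HasDerivedCategory.{w} (ModuleCat.{0} O)]

/-- perfect objects -/
def Perf (E : DerivedCategory (ModuleCat.{0} O)) : Prop :=
  ∃ Y : CochainComplex (ModuleCat.{0} O) ℤ, PC Y ∧ Nonempty (E ≅ Q.obj Y)

lemma Q_map_surjective (K L : CochainComplex (ModuleCat.{0} O) ℤ) [K.IsKProjective]
    (f : Q.obj K ⟶ Q.obj L) : ∃ g : K ⟶ L, Q.map g = f := by
  obtain ⟨g, hg⟩ := (CochainComplex.IsKProjective.Qh_map_bijective K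
    ((HomotopyCategory.quotient _ _).obj L)).2
    ((quotientCompQhIso _).hom.app K ≫ f ≫ (quotientCompQhIso _).inv.app L)
  obtain ⟨g, rfl⟩ := (HomotopyCategory.quotient _ _).map_surjective g
  refine ⟨g, ?_⟩
  have := (quotientCompQhIso (ModuleCat.{0} O)).hom.naturality g
  dsimp at this hg
  rw [hg] at this
  simpa using this.symm

lemma Perf.of_triangle {A B E : DerivedCategory (ModuleCat.{0} O)} (hA : Perf A) (hB : Perf B)
    {f : A ⟶ B} {g : B ⟶ E} {h : E ⟶ A⟦(1 : ℤ)⟧} (hT : Triangle.mk f g h ∈ distTriang _) :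
    Perf E := by
  obtain ⟨Y, hY, ⟨e⟩⟩ := hA
  obtain ⟨Z, hZ, ⟨e'⟩⟩ := hB
  have := hY.isKProjective
  obtain ⟨φ, hφ⟩ := Q_map_surjective Y Z (e.inv ≫ f ≫ e'.hom)
  refine ⟨_, hY.mappingCone hZ φ, ⟨?_⟩⟩
  exact Triangle.π₃.mapIso (isoTriangleOfIso₁₂ _ _ hT
    (DerivedCategory.mappingCone_triangle_distinguished φ) e e' (by
      change f ≫ e'.hom = e.hom ≫ Q.map φ
      simp [hφ]))

lemma Perf.shift {E : DerivedCategory (ModuleCat.{0} O)} (hE : Perf E) (k : ℤ) : Perf (E⟦k⟧) := by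
  obtain ⟨Y, hY, ⟨e⟩⟩ := hE
  exact ⟨_, hY.shift k, ⟨(shiftFunctor _ k).mapIso e ≪≫ (Q.commShiftIso k).symm.app Y⟩⟩

lemma Perf.of_triangle' {A B E : DerivedCategory (ModuleCat.{0} O)} (hA : Perf A) (hE : Perf E)
    {f : A ⟶ B} {g : B ⟶ E} {h : E ⟶ A⟦(1 : ℤ)⟧} (hT : Triangle.mk f g h ∈ distTriang _) :
    Perf B :=
  Perf.of_triangle (hE.shift (-1)) hA (inv_rot_of_distTriang _ hT)

lemma Perf.single (F : ModuleCat.{0} O) [Module.Finite O F] [Module.Free O F] (b : ℤ) :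
    Perf ((singleFunctor _ b).obj F) :=
  ⟨_, PC.single F b, ⟨Iso.refl _⟩⟩

lemma hom_zero {Y : CochainComplex (ModuleCat.{0} O) ℤ} (hY : PC Y) (c : ℤ)
    (h : IsZero (Y.X c)) (M : ModuleCat.{0} O) (f : Q.obj Y ⟶ (singleFunctor _ c).obj M) :
    f = 0 := by
  have := hY.isKProjective
  obtain ⟨g, rfl⟩ := Q_map_surjective Y ((HomologicalComplex.single _ (ComplexShape.up ℤ) c).obj M) f
  have : g = 0 := HomologicalComplex.to_single_hom_ext (h.eq_of_src _ _)
  rw [this]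
  exact Q.map_zero _ _

lemma ext1_zero (M N : ModuleCat.{0} O) (c : ℤ)
    (h : ∀ f : (singleFunctor _ c).obj M ⟶ (singleFunctor _ (c - 1)).obj N, f = 0)
    (x : Abelian.Ext M N 1) : x = 0 := by
  apply Abelian.Ext.homEquiv.injective
  generalize Abelian.Ext.homEquiv x = y
  generalize Abelian.Ext.homEquiv (0 : Abelian.Ext M N 1) = z
  suffices ∀ y : ShiftedHom ((singleFunctor (ModuleCat O) 0).obj M)
    ((singleFunctor (ModuleCat O) 0).obj N) ((1:ℕ):ℤ), y = 0 by rw [this y, this z]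
  intro y
  let e1 := ((singleFunctors (ModuleCat O)).shiftIso c 0 c (by simp)).app M
  let e2 := ((singleFunctors (ModuleCat O)).shiftIso c (-1) (c-1) (by lia)).app N
  let e3 := ((singleFunctors (ModuleCat O)).shiftIso ((1:ℕ):ℤ) (-1) 0 (by simp)).app N
  obtain ⟨g, hg⟩ := (shiftFunctor (DerivedCategory (ModuleCat O)) c).map_surjective
    (X := (singleFunctor _ c).obj M) (Y := (singleFunctor _ (c - 1)).obj N)
    (e1.hom ≫ y ≫ e3.hom ≫ e2.inv)
  rw [h g, Functor.map_zero] at hg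
  have : y = e1.inv ≫ (e1.hom ≫ y ≫ e3.hom ≫ e2.inv) ≫ e2.hom ≫ e3.inv := by simp
  rw [this, ← hg, zero_comp, comp_zero]

lemma epi_homology {K L : CochainComplex (ModuleCat.{0} O) ℤ} (p : K ⟶ L)
    {E : DerivedCategory (ModuleCat.{0} O)} (e : Q.obj L ≅ E) (b : ℤ)
    (h : Epi (HomologicalComplex.homologyMap p b)) :
    Epi ((homologyFunctor (ModuleCat.{0} O) b).map (Q.map p ≫ e.hom)) := by
  have h2 : Epi ((homologyFunctor (ModuleCat.{0} O) b).map (Q.map p)) := by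
    have := homologyFunctorFactors_hom_naturality p b
    have h3 : Epi ((homologyFunctor (ModuleCat.{0} O) b).map (Q.map p) ≫
        (homologyFunctorFactors (ModuleCat.{0} O) b).hom.app L) := by
      rw [this]
      exact @epi_comp _ _ _ _ _ _ inferInstance _ h
    have h4 := epi_comp ((homologyFunctor (ModuleCat.{0} O) b).map (Q.map p) ≫
        (homologyFunctorFactors (ModuleCat.{0} O) b).hom.app L)
        ((homologyFunctorFactors (ModuleCat.{0} O) b).inv.app L)
    rw [Category.assoc, Iso.hom_inv_id_app] at h4
    have h5 := Category.comp_id ((homologyFunctor (ModuleCat.{0} O) b).map (Q.map p))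
    exact h5 ▸ h4
  rw [Functor.map_comp]
  exact epi_comp _ _

lemma exists_cover (E : DerivedCategory (ModuleCat.{0} O)) (b : ℤ)
    (hfg : Module.Finite O ((homologyFunctor (ModuleCat.{0} O) b).obj E)) :
    ∃ (F : ModuleCat.{0} O) (_ : Module.Finite O F) (_ : Module.Free O F)
      (p : (singleFunctor _ b).obj F ⟶ E), Epi ((homologyFunctor (ModuleCat.{0} O) b).map p) := by
  let K := Q.objPreimage E
  let e : Q.obj K ≅ E := Q.objObjPreimageIso E
  let eH : K.homology b ≅ (homologyFunctor (ModuleCat.{0} O) b).obj E :=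
    ((homologyFunctorFactors _ b).app K).symm ≪≫ (homologyFunctor (ModuleCat.{0} O) b).mapIso e
  have : Module.Finite O (K.homology b) := Module.Finite.equiv eH.symm.toLinearEquiv
  obtain ⟨n, g, hg⟩ := Module.Finite.exists_fin' O (K.homology b)
  let F : ModuleCat.{0} O := ModuleCat.of O (Fin n → O)
  have : Projective F := ModuleCat.projective_of_free (Pi.basisFun O (Fin n))
  let q : F ⟶ K.homology b := ModuleCat.ofHom g
  have hq : Epi q := by
    rw [ModuleCat.epi_iff_surjective]
    exact hg
  let l : F ⟶ K.cycles b := Projective.factorThru q (K.homologyπ b)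
  have hl : l ≫ K.homologyπ b = q := Projective.factorThru_comp _ _
  let p : (HomologicalComplex.single _ (ComplexShape.up ℤ) b).obj F ⟶ K :=
    HomologicalComplex.mkHomFromSingle (l ≫ K.iCycles b) (by simp)
  refine ⟨F, inferInstanceAs (Module.Finite O (Fin n → O)),
    inferInstanceAs (Module.Free O (Fin n → O)), Q.map p ≫ e.hom, ?_⟩
  have h1 : Epi (HomologicalComplex.homologyMap p b) := by
    let s : F ⟶ HomologicalComplex.cycles
        ((HomologicalComplex.single _ (ComplexShape.up ℤ) b).obj F) b :=
      HomologicalComplex.liftCycles _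
        (HomologicalComplex.singleObjXSelf (ComplexShape.up ℤ) b F).inv (b + 1) (by simp) (by simp)
    have hs : s ≫ HomologicalComplex.cyclesMap p b = l := by
      rw [← cancel_mono (K.iCycles b)]
      simp [s, p]
    have : (s ≫ HomologicalComplex.homologyπ _ b) ≫ HomologicalComplex.homologyMap p b = q := by
      rw [Category.assoc, HomologicalComplex.homologyπ_naturality, reassoc_of% hs, hl]
    exact epi_of_epi_fac this
  exact epi_homology p e b h1

lemma homology_single_finite (F : ModuleCat.{0} O) [Module.Finite O F] (b i : ℤ) :
    Module.Finite O ((homologyFunctor (ModuleCat.{0} O) i).obj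
      ((singleFunctor (ModuleCat.{0} O) b).obj F)) := by
  by_cases h : i = b
  · subst h
    let e : (homologyFunctor (ModuleCat.{0} O) i).obj
      ((singleFunctor (ModuleCat.{0} O) i).obj F) ≅ F :=
      (homologyFunctorFactors (ModuleCat.{0} O) i).app
        ((HomologicalComplex.single _ (ComplexShape.up ℤ) i).obj F) ≪≫
      HomologicalComplex.singleObjHomologySelfIso _ _ _
    exact Module.Finite.equiv e.symm.toLinearEquiv
  · apply finite_of_isZero
    rcases lt_or_gt_of_ne h with h | h
    · exact isZero_of_isGE _ b i h
    · exact isZero_of_isLE _ b i h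

lemma finite_of_homology_single (M : ModuleCat.{0} O) (b : ℤ)
    (h : Module.Finite O ((homologyFunctor (ModuleCat.{0} O) b).obj
      ((singleFunctor (ModuleCat.{0} O) b).obj M))) : Module.Finite O M := by
  let e : (homologyFunctor (ModuleCat.{0} O) b).obj
      ((singleFunctor (ModuleCat.{0} O) b).obj M) ≅ M :=
      (homologyFunctorFactors (ModuleCat.{0} O) b).app
        ((HomologicalComplex.single _ (ComplexShape.up ℤ) b).obj M) ≪≫
      HomologicalComplex.singleObjHomologySelfIso _ _ _
  exact Module.Finite.equiv e.toLinearEquiv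

lemma main_aux [IsNoetherianRing O] [IsLocalRing O] (c : ℤ) (d : ℕ) :
    ∀ (E : DerivedCategory (ModuleCat.{0} O)), E.IsGE c → E.IsLE (c + d) →
      (∀ i, Module.Finite O ((homologyFunctor (ModuleCat.{0} O) i).obj E)) →
      (∀ f : E ⟶ (singleFunctor (ModuleCat.{0} O) (c - 1)).obj
        (ModuleCat.of O (IsLocalRing.ResidueField O)), f = 0) → Perf E := by
  induction d with
  | zero =>
    intro E h1 h2 h3 h4
    have h2' : E.IsLE c := by simpa using h2
    obtain ⟨M, ⟨e⟩⟩ := exists_iso_singleFunctor_obj_of_isGE_of_isLE E c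
    have hM : Module.Finite O M := by
      have := h3 c
      exact finite_of_homology_single M c (Module.Finite.equiv
        ((homologyFunctor (ModuleCat.{0} O) c).mapIso e).toLinearEquiv)
    have hfree : Module.Free O M := by
      refine free_of_ext M (ext1_zero _ _ c fun f => ?_)
      have := h4 (e.hom ≫ f)
      rw [← cancel_epi e.hom, this, comp_zero]
    exact ⟨_, PC.single M c, ⟨e⟩⟩
  | succ d ih =>
    intro E h1 h2 h3 h4
    obtain ⟨F, hF1, hF2, p, hp⟩ := exists_cover E (c + (d + 1 : ℕ)) (h3 _)
    obtain ⟨C, q, r, hT⟩ := distinguished_cocone_triangle p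
    have hFz (i : ℤ) (hi : i ≠ c + (d + 1 : ℕ)) : IsZero ((homologyFunctor (ModuleCat.{0} O) i).obj
        ((singleFunctor (ModuleCat.{0} O) (c + (d + 1 : ℕ))).obj F)) := by
      rcases lt_or_gt_of_ne hi with h | h
      · exact isZero_of_isGE _ _ i h
      · exact isZero_of_isLE _ _ i h
    have ex (i : ℤ) := HomologySequence.exact₃ _ hT i (i + 1) rfl
    refine Perf.of_triangle' (Perf.single F _) (ih C ?_ ?_ ?_ ?_) hT
    · rw [isGE_iff]
      intro i hi
      exact (ex i).isZero_X₂ ((isZero_of_isGE E c i hi).eq_of_src _ _)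
        ((hFz (i + 1) (by lia)).eq_of_tgt _ _)
    · rw [isLE_iff]
      intro i hi
      by_cases hi' : i = c + (d + 1 : ℕ)
      · subst hi'
        refine (ex _).isZero_X₂ ?_ ((hFz _ (by lia)).eq_of_tgt _ _)
        exact (HomologySequence.epi_homologyMap_mor₁_iff _ hT _).1 hp
      · exact (ex i).isZero_X₂ ((isZero_of_isLE E (c + (d + 1 : ℕ)) i (by lia)).eq_of_src _ _)
          ((hFz (i + 1) (by lia)).eq_of_tgt _ _)
    · intro i
      have a1 := h3 i
      have a2 := homology_single_finite F (c + (d + 1 : ℕ)) (i + 1)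
      exact @finite_of_exact O _ _ _ (ex i) a1 a2
    · intro f
      obtain ⟨g, hg⟩ := Triangle.yoneda_exact₃ _ hT f (h4 _)
      have hz : g = 0 := by
        let e : (Q.obj (((HomologicalComplex.single _ (ComplexShape.up ℤ)
            (c + (d + 1 : ℕ))).obj F)⟦(1 : ℤ)⟧)) ≅
            ((singleFunctor (ModuleCat.{0} O) (c + (d + 1 : ℕ))).obj F)⟦(1 : ℤ)⟧ :=
          (Q.commShiftIso (1 : ℤ)).app _
        have := hom_zero ((PC.single F (c + (d + 1 : ℕ))).shift 1) (c - 1)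
          (HomologicalComplex.isZero_single_obj_X (ComplexShape.up ℤ) _ F (c - 1 + 1) (by lia))
          _ (e.hom ≫ g)
        exact (cancel_epi e.hom).1 (this.trans comp_zero.symm)
      rw [hg, hz]
      exact comp_zero

end PerfAux

/-- Let `O` be a commutative Noetherian local ring with maximal ideal `m`.
A bounded complex `X` of finitely generated `O`-modules is perfect (isomorphic in the derived
category to a bounded complex of finite rank free modules) if and only if there exists `n₀ ∈ ℕ`
such that `Hom_{D(O)}(X, (O/m)[n]) = 0` for all `n ≥ n₀`. -/
theorem stmt2 (O : Type) [CommRing O] [IsNoetherianRing O] [IsLocalRing O]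
    [HasDerivedCategory (ModuleCat O)]
    (X : CochainComplex (ModuleCat O) ℤ)
    (hXbdd : ∃ a b : ℤ, ∀ n : ℤ, (n < a ∨ b < n) → IsZero (X.X n))
    (hXfg : ∀ n : ℤ, Module.Finite O (X.X n)) :
    (∃ Y : CochainComplex (ModuleCat O) ℤ,
        (∃ a b : ℤ, ∀ n : ℤ, (n < a ∨ b < n) → IsZero (Y.X n)) ∧
        (∀ n : ℤ, Module.Finite O (Y.X n) ∧ Module.Free O (Y.X n)) ∧
        Nonempty (DerivedCategory.Q.obj X ≅ DerivedCategory.Q.obj Y)) ↔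
      (∃ n₀ : ℕ, ∀ n : ℕ, n₀ ≤ n →
        ∀ f : DerivedCategory.Q.obj X ⟶
          ((DerivedCategory.singleFunctor (ModuleCat O) 0).obj
            (ModuleCat.of O (IsLocalRing.ResidueField O)))⟦(n : ℤ)⟧, f = 0) := by
  have sh (n m : ℤ) (h : n + m = 0) := ((DerivedCategory.singleFunctors (ModuleCat.{0} O)).shiftIso
    n m 0 h).app (ModuleCat.of O (IsLocalRing.ResidueField O))
  constructor
  · rintro ⟨Y, ⟨a, b, hab⟩, hf, ⟨e⟩⟩
    refine ⟨(1 - a).toNat, fun n hn f => ?_⟩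
    have s := sh n (-n) (by lia)
    have := PerfAux.hom_zero ⟨⟨a, b, hab⟩, hf⟩ (-n) (hab _ (by lia)) _ (e.inv ≫ f ≫ s.hom)
    rw [← cancel_mono s.hom, ← cancel_epi e.inv]
    rw [this, zero_comp, comp_zero]
  · rintro ⟨n₀, h⟩
    obtain ⟨a, b, hab⟩ := hXbdd
    have hL : X.IsStrictlyLE b := by
      rw [CochainComplex.isStrictlyLE_iff]
      exact fun i hi => hab i (Or.inr hi)
    have hG : X.IsStrictlyGE a := by
      rw [CochainComplex.isStrictlyGE_iff]
      exact fun i hi => hab i (Or.inl hi)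
    let c : ℤ := min (min a b) (1 - n₀)
    obtain ⟨d, hd⟩ : ∃ d : ℕ, b = c + d := ⟨(b - c).toNat, by lia⟩
    have g1 : (DerivedCategory.Q.obj X).IsGE c := by
      have := X.isStrictlyGE_of_ge c a (by lia)
      infer_instance
    have g2 : (DerivedCategory.Q.obj X).IsLE (c + d) := by
      rw [← hd]
      infer_instance
    obtain ⟨Y, ⟨hY1, hY2⟩, hY3⟩ := PerfAux.main_aux c d (DerivedCategory.Q.obj X) g1 g2 (by
      intro i
      have := hXfg i
      have h1 : Module.Finite O (X.cycles i) :=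
        Module.Finite.of_injective (X.iCycles i).hom
          ((ModuleCat.mono_iff_injective _).1 inferInstance)
      have h2 : Module.Finite O (X.homology i) :=
        Module.Finite.of_surjective (X.homologyπ i).hom
          ((ModuleCat.epi_iff_surjective _).1 inferInstance)
      let eX : X.homology i ≅ (DerivedCategory.homologyFunctor (ModuleCat.{0} O) i).obj
        (DerivedCategory.Q.obj X) :=
        ((DerivedCategory.homologyFunctorFactors (ModuleCat.{0} O) i).app X).symm
      exact Module.Finite.equiv eX.toLinearEquiv) (by
      intro f
      have s := sh ((1 - c).toNat) (c - 1) (by lia)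
      have := h (1 - c).toNat (by lia) (f ≫ s.inv)
      rw [← cancel_mono s.inv, this, zero_comp])
    exact ⟨Y, hY1, hY2, hY3⟩
end

section
/- Let A be an abelian category and S : D^b(A) → D^b(A) a triangle equivalence. Suppose X₁, X₂ are objects of D^b(A) and m₁, m₂, n₁, n₂ ∈ ℤ satisfy S^{m₁}X₁ ≅ X₁[n₁], S^{m₂}X₂ ≅ X₂[n₂], and d = m₁n₂ − m₂n₁ ≠ 0. Then Hom_{D^b(A)}(X₁, X₂) = 0 and Hom_{D^b(A)}(X₂, X₁) = 0. -/
open CategoryTheory Limits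

/-- Natural number powers of a self-equivalence. -/
def npowEquiv {C : Type*} [Category C] (E : C ≌ C) : ℕ → (C ≌ C)
  | 0 => CategoryTheory.Equivalence.refl
  | n + 1 => (npowEquiv E n).trans E

/-- Integer powers of a self-equivalence. -/
def zpowEquiv {C : Type*} [Category C] (E : C ≌ C) : ℤ → (C ≌ C)
  | Int.ofNat n => npowEquiv E n
  | Int.negSucc n => npowEquiv E.symm (n + 1)

/-- Object-level isomorphism for a power shifted by one. -/
lemma npow_succ_left {C : Type*} [Category C] (E : C ≌ C) (n : ℕ) (X : C) :
    Nonempty ((npowEquiv E (n+1)).functor.obj X ≅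
      E.functor.obj ((npowEquiv E n).functor.obj X)) := ⟨Iso.refl _⟩

lemma zpowEquiv_succ {C : Type*} [Category C] (E : C ≌ C) (a : ℤ) (X : C) :
    Nonempty ((zpowEquiv E (a+1)).functor.obj X ≅
      E.functor.obj ((zpowEquiv E a).functor.obj X)) := by
  cases a with
  | ofNat n => exact ⟨Iso.refl _⟩
  | negSucc n =>
    have h : Int.negSucc n + 1 = -(n : ℤ) := by omega
    rw [h]
    cases n with
    | zero => exact ⟨(E.counitIso.app X).symm⟩
    | succ k => exact ⟨(E.counitIso.app ((npowEquiv E.symm (k+1)).functor.obj X)).symm⟩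

lemma zpowEquiv_add {C : Type*} [Category C] (E : C ≌ C) (a b : ℤ) (X : C) :
    Nonempty ((zpowEquiv E (a+b)).functor.obj X ≅
      (zpowEquiv E b).functor.obj ((zpowEquiv E a).functor.obj X)) := by
  induction b using Int.induction_on with
  | zero => rw [add_zero]; exact ⟨Iso.refl _⟩
  | succ i ih =>
    obtain ⟨e⟩ := ih
    obtain ⟨e1⟩ := zpowEquiv_succ E (a + i) X
    obtain ⟨e2⟩ := zpowEquiv_succ E i ((zpowEquiv E a).functor.obj X)
    rw [← add_assoc]
    exact ⟨e1 ≪≫ E.functor.mapIso e ≪≫ e2.symm⟩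
  | pred i ih =>
    obtain ⟨e⟩ := ih
    obtain ⟨e1⟩ := zpowEquiv_succ E (a + (-i - 1)) X
    obtain ⟨e2⟩ := zpowEquiv_succ E (-i - 1) ((zpowEquiv E a).functor.obj X)
    rw [show a + (-(i:ℤ) - 1) + 1 = a + -i by ring] at e1
    rw [show (-(i:ℤ) - 1) + 1 = -i by ring] at e2
    exact ⟨E.functor.preimageIso (e1.symm ≪≫ e ≪≫ e2)⟩

lemma zpowEquiv_shift {C : Type*} [Category C] [HasShift C ℤ] (E : C ≌ C)
    [E.functor.CommShift ℤ] (a n : ℤ) (X : C) :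
    Nonempty ((zpowEquiv E a).functor.obj (X⟦n⟧) ≅ ((zpowEquiv E a).functor.obj X)⟦n⟧) := by
  induction a using Int.induction_on with
  | zero => exact ⟨Iso.refl _⟩
  | succ i ih =>
    obtain ⟨e⟩ := ih
    obtain ⟨e1⟩ := zpowEquiv_succ E i (X⟦n⟧)
    obtain ⟨e2⟩ := zpowEquiv_succ E i X
    exact ⟨e1 ≪≫ E.functor.mapIso e ≪≫ (E.functor.commShiftIso n).app _ ≪≫
      (shiftFunctor C n).mapIso e2.symm⟩
  | pred i ih =>
    obtain ⟨e⟩ := ih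
    obtain ⟨e1⟩ := zpowEquiv_succ E (-i - 1) (X⟦n⟧)
    obtain ⟨e2⟩ := zpowEquiv_succ E (-i - 1) X
    rw [show (-(i:ℤ) - 1) + 1 = -i by ring] at e1 e2
    exact ⟨E.functor.preimageIso (e1.symm ≪≫ e ≪≫ (shiftFunctor C n).mapIso e2 ≪≫
      ((E.functor.commShiftIso n).app _).symm)⟩

lemma zpowEquiv_mul {C : Type*} [Category C] [HasShift C ℤ] (E : C ≌ C)
    [E.functor.CommShift ℤ] (m n : ℤ) (X : C)
    (h : Nonempty ((zpowEquiv E m).functor.obj X ≅ X⟦n⟧)) (k : ℤ) :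
    Nonempty ((zpowEquiv E (k * m)).functor.obj X ≅ X⟦k * n⟧) := by
  obtain ⟨e⟩ := h
  induction k using Int.induction_on with
  | zero =>
    rw [zero_mul, zero_mul]
    exact ⟨((shiftFunctorZero C ℤ).app X).symm⟩
  | succ i ih =>
    obtain ⟨e0⟩ := ih
    obtain ⟨e1⟩ := zpowEquiv_add E (i * m) m X
    obtain ⟨e2⟩ := zpowEquiv_shift E m (i * n) X
    rw [show ((i:ℤ) + 1) * m = i * m + m by ring]
    exact ⟨e1 ≪≫ (zpowEquiv E m).functor.mapIso e0 ≪≫ e2 ≪≫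
      (shiftFunctor C _).mapIso e ≪≫
      ((shiftFunctorAdd' C n (i * n) (((i:ℤ) + 1) * n) (by ring)).app X).symm⟩
  | pred i ih =>
    obtain ⟨e0⟩ := ih
    obtain ⟨e1⟩ := zpowEquiv_add E ((-i - 1) * m) m X
    obtain ⟨e2⟩ := zpowEquiv_shift E m ((-i - 1) * n) X
    rw [show (-(i:ℤ) - 1) * m + m = -i * m by ring] at e1
    exact ⟨(zpowEquiv E m).functor.preimageIso (e1.symm ≪≫ e0 ≪≫
      (shiftFunctorAdd' C n ((-(i:ℤ) - 1) * n) (-i * n) (by ring)).app X ≪≫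
      (shiftFunctor C _).mapIso e.symm ≪≫ e2.symm)⟩

lemma stmt6_half (A : Type) [Category A] [Abelian A] [HasDerivedCategory A]
    (E : DerivedCategory A ≌ DerivedCategory A)
    [E.functor.CommShift ℤ]
    (X₁ X₂ : DerivedCategory A)
    (hX₁ : ∃ a b : ℤ, ∀ n : ℤ, (n < a ∨ b < n) →
      IsZero ((DerivedCategory.homologyFunctor A n).obj X₁))
    (hX₂ : ∃ a b : ℤ, ∀ n : ℤ, (n < a ∨ b < n) →
      IsZero ((DerivedCategory.homologyFunctor A n).obj X₂))
    (m₁ m₂ n₁ n₂ : ℤ)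
    (h₁ : Nonempty ((zpowEquiv E m₁).functor.obj X₁ ≅ X₁⟦n₁⟧))
    (h₂ : Nonempty ((zpowEquiv E m₂).functor.obj X₂ ≅ X₂⟦n₂⟧))
    (hd : m₁ * n₂ - m₂ * n₁ ≠ 0) (f : X₁ ⟶ X₂) : f = 0 := by
  obtain ⟨_, b, hb⟩ := hX₁
  obtain ⟨a, _, ha⟩ := hX₂
  have i1 : X₁.IsLE b := (DerivedCategory.isLE_iff _ _).2 fun i hi => hb i (Or.inr hi)
  have i2 : X₂.IsGE a := (DerivedCategory.isGE_iff _ _).2 fun i hi => ha i (Or.inl hi)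
  obtain ⟨k, hk⟩ : ∃ k : ℤ, k * (m₁ * n₂ - m₂ * n₁) < a - b := by
    refine ⟨-(m₁ * n₂ - m₂ * n₁) * (|a - b| + 1), ?_⟩
    have h1 : 1 ≤ (m₁ * n₂ - m₂ * n₁) ^ 2 := by have := sq_pos_of_ne_zero hd; omega
    have h2 := neg_abs_le (a - b)
    have h3 := abs_nonneg (a - b)
    nlinarith
  obtain ⟨e1⟩ := zpowEquiv_mul E m₁ n₁ X₁ h₁ (k * m₂)
  obtain ⟨e2⟩ := zpowEquiv_mul E m₂ n₂ X₂ h₂ (k * m₁)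
  rw [show k * m₁ * m₂ = k * m₂ * m₁ by ring] at e2
  have key : ∀ g : X₁⟦k * m₂ * n₁⟧ ⟶ X₂⟦k * m₁ * n₂⟧, g = 0 := by
    intro g
    have j1 := DerivedCategory.TStructure.t.isLE_shift X₁ b (k * m₂ * n₁) (b - k * m₂ * n₁) (by ring)
    have j2 := DerivedCategory.TStructure.t.isGE_shift X₂ a (k * m₁ * n₂) (a - k * m₁ * n₂) (by ring)
    exact DerivedCategory.TStructure.t.zero g (b - k * m₂ * n₁) (a - k * m₁ * n₂) (by linarith)
  apply (zpowEquiv E (k * m₂ * m₁)).functor.map_injective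
  rw [← cancel_epi e1.inv, ← cancel_mono e2.hom]
  rw [key ((e1.inv ≫ _) ≫ e2.hom), key ((e1.inv ≫ _) ≫ e2.hom)]

/-- Let `A` be an abelian category and `S : D^b(A) → D^b(A)` a triangle
self-equivalence.  Suppose `X₁, X₂` are (cohomologically bounded) objects of the derived
category and `m₁, m₂, n₁, n₂ ∈ ℤ` satisfy `S^{m₁}X₁ ≅ X₁[n₁]`, `S^{m₂}X₂ ≅ X₂[n₂]` and
`d = m₁n₂ − m₂n₁ ≠ 0`.  Then `Hom(X₁, X₂) = 0` and `Hom(X₂, X₁) = 0`. -/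
theorem stmt6 (A : Type) [Category A] [Abelian A] [HasDerivedCategory A]
    (E : DerivedCategory A ≌ DerivedCategory A)
    [E.functor.CommShift ℤ] [E.functor.IsTriangulated]
    (X₁ X₂ : DerivedCategory A)
    (hX₁ : ∃ a b : ℤ, ∀ n : ℤ, (n < a ∨ b < n) →
      IsZero ((DerivedCategory.homologyFunctor A n).obj X₁))
    (hX₂ : ∃ a b : ℤ, ∀ n : ℤ, (n < a ∨ b < n) →
      IsZero ((DerivedCategory.homologyFunctor A n).obj X₂))
    (m₁ m₂ n₁ n₂ : ℤ)
    (h₁ : Nonempty ((zpowEquiv E m₁).functor.obj X₁ ≅ X₁⟦n₁⟧))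
    (h₂ : Nonempty ((zpowEquiv E m₂).functor.obj X₂ ≅ X₂⟦n₂⟧))
    (hd : m₁ * n₂ - m₂ * n₁ ≠ 0) :
    (∀ f : X₁ ⟶ X₂, f = 0) ∧ (∀ f : X₂ ⟶ X₁, f = 0) := by
  exact ⟨stmt6_half A E X₁ X₂ hX₁ hX₂ m₁ m₂ n₁ n₂ h₁ h₂ hd,
    stmt6_half A E X₂ X₁ hX₂ hX₁ m₂ m₁ n₂ n₁ h₂ h₁ (fun h => hd (by linarith))⟩
end
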